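/- Fix positive reals p₋₁, p₀, p₁ and let P(1) = p₋₁ + p₀ + p₁. Let w_{n,k} denote the total weight of Motzkin walks of length n with exactly k sign changes, b_{n,k} the total weight of bridges of length n with k sign changes, and b⁺_{n,k} the total weight of positive bridges of length n with k sign changes. For real z with 0 < z < 1/P(1) and real u with 0 ≤ u ≤ 1, write W(z,u) = Σ_{n,k} w_{n,k} zⁿ u^k, B(z,u) = Σ_{n,k} b_{n,k} zⁿ u^k, B₊(z,u) = Σ_{n,k} b⁺_{n,k} zⁿ u^k, W(z) = 1/(1−zP(1)) and B(z) = B(z,1). Then all these series converge and W(z,u) = B(z,u)·W(z)/B(z) + B₊(z,u)·(W(z)/B(z) − 1)·(u − 1). -/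

import Mathlib

open scoped BigOperators Classical

/-- Value of a step encoded by `Fin 3`: `0 ↦ -1`, `1 ↦ 0`, `2 ↦ +1`. -/
def stepVal (s : Fin 3) : ℤ := (s : ℤ) - 1

/-- Weight of a single step: `p₋₁` for `-1`, `p₀` for `0`, `p₁` for `+1`. -/
def stepWeight (pm p0 p1 : ℝ) (s : Fin 3) : ℝ :=
  if s = 0 then pm else if s = 1 then p0 else p1

/-- Weight of a Motzkin walk (product of its step weights). -/
def walkWeight (pm p0 p1 : ℝ) {n : ℕ} (w : Fin n → Fin 3) : ℝ :=
  ∏ i, stepWeight pm p0 p1 (w i)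

/-- Partial sum `ω_j` of the walk `w`. -/
def psum {n : ℕ} (w : Fin n → Fin 3) (j : ℕ) : ℤ :=
  ∑ i ∈ Finset.univ.filter (fun i : Fin n => (i : ℕ) < j), stepVal (w i)

/-- Total weight of Motzkin bridges of length `n`. -/
noncomputable def bridgeW (pm p0 p1 : ℝ) (n : ℕ) : ℝ :=
  ∑ w ∈ Finset.univ.filter (fun w : Fin n → Fin 3 => psum w n = 0),
    walkWeight pm p0 p1 w

/-- Number of returns to zero of a walk of length `n`. -/
def retZero {n : ℕ} (w : Fin n → Fin 3) : ℕ :=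
  ((Finset.Icc 1 n).filter (fun j => psum w j = 0)).card

/-- Total weight of walks of length `n` with exactly `k` returns to zero. -/
noncomputable def walkRetW (pm p0 p1 : ℝ) (n k : ℕ) : ℝ :=
  ∑ w ∈ Finset.univ.filter (fun w : Fin n → Fin 3 => retZero w = k),
    walkWeight pm p0 p1 w

/-- Number of sign changes of a walk of length `n`. -/
def signChanges {n : ℕ} (w : Fin n → Fin 3) : ℕ :=
  (((Finset.range (n+1)) ×ˢ (Finset.range (n+1))).filter
    (fun p => p.1 < p.2 ∧ psum w p.1 * psum w p.2 < 0 ∧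
      ∀ l ∈ Finset.Ioo p.1 p.2, psum w l = 0)).card

/-- Total weight of bridges of length `n` with exactly `k` sign changes. -/
noncomputable def bridgeSignW (pm p0 p1 : ℝ) (n k : ℕ) : ℝ :=
  ∑ w ∈ Finset.univ.filter
      (fun w : Fin n → Fin 3 => psum w n = 0 ∧ signChanges w = k),
    walkWeight pm p0 p1 w

/-- Total weight of positive excursions of length `n`. -/
noncomputable def posExcW (pm p0 p1 : ℝ) (n : ℕ) : ℝ :=
  ∑ w ∈ Finset.univ.filter
      (fun w : Fin n → Fin 3 => psum w n = 0 ∧ ∀ j ∈ Finset.range (n+1), 0 ≤ psum w j),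
    walkWeight pm p0 p1 w

/-- Total weight of negative excursions of length `n`. -/
noncomputable def negExcW (pm p0 p1 : ℝ) (n : ℕ) : ℝ :=
  ∑ w ∈ Finset.univ.filter
      (fun w : Fin n → Fin 3 => psum w n = 0 ∧ ∀ j ∈ Finset.range (n+1), psum w j ≤ 0),
    walkWeight pm p0 p1 w

/-- A positive bridge: a bridge whose last nonzero partial sum is positive. -/
def IsPosBridge {n : ℕ} (w : Fin n → Fin 3) : Prop :=
  psum w n = 0 ∧ ∃ j ∈ Finset.range (n+1),
    0 < psum w j ∧ ∀ l ∈ Finset.Ioc j n, psum w l = 0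

/-- A negative bridge: a bridge whose last nonzero partial sum is negative. -/
def IsNegBridge {n : ℕ} (w : Fin n → Fin 3) : Prop :=
  psum w n = 0 ∧ ∃ j ∈ Finset.range (n+1),
    psum w j < 0 ∧ ∀ l ∈ Finset.Ioc j n, psum w l = 0

instance {n : ℕ} (w : Fin n → Fin 3) : Decidable (IsPosBridge w) := by
  unfold IsPosBridge; infer_instance

instance {n : ℕ} (w : Fin n → Fin 3) : Decidable (IsNegBridge w) := by
  unfold IsNegBridge; infer_instance

/-- Total weight of positive bridges of length `n` with `k` sign changes. -/
noncomputable def posBridgeSignW (pm p0 p1 : ℝ) (n k : ℕ) : ℝ :=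
  ∑ w ∈ Finset.univ.filter
      (fun w : Fin n → Fin 3 => IsPosBridge w ∧ signChanges w = k),
    walkWeight pm p0 p1 w

/-- Total weight of negative bridges of length `n` with `k` sign changes. -/
noncomputable def negBridgeSignW (pm p0 p1 : ℝ) (n k : ℕ) : ℝ :=
  ∑ w ∈ Finset.univ.filter
      (fun w : Fin n → Fin 3 => IsNegBridge w ∧ signChanges w = k),
    walkWeight pm p0 p1 w

/-- Total weight of walks of length `n` with `k` sign changes. -/
noncomputable def walkSignW (pm p0 p1 : ℝ) (n k : ℕ) : ℝ :=
  ∑ w ∈ Finset.univ.filter (fun w : Fin n → Fin 3 => signChanges w = k),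
    walkWeight pm p0 p1 w

/-- Height of a walk of length `n` (as a natural number; it is `max_j ω_j ≥ 0`). -/
def height {n : ℕ} (w : Fin n → Fin 3) : ℕ :=
  (Finset.range (n+1)).sup (fun j => (psum w j).toNat)

/-- Total weight of walks of length `n` of height exactly `h`. -/
noncomputable def heightW (pm p0 p1 : ℝ) (n h : ℕ) : ℝ :=
  ∑ w ∈ Finset.univ.filter (fun w : Fin n → Fin 3 => height w = h),
    walkWeight pm p0 p1 w

lemma psum_eq_sum_ite {n : ℕ} (w : Fin n → Fin 3) (j : ℕ) :
    psum w j = ∑ i : Fin n, if (i : ℕ) < j then stepVal (w i) else 0 := by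
  rw [psum, Finset.sum_filter]

lemma psum_self {n : ℕ} (w : Fin n → Fin 3) : psum w n = ∑ i, stepVal (w i) := by
  simp [psum_eq_sum_ite]

lemma psum_snoc_of_le {n : ℕ} (w : Fin n → Fin 3) (s : Fin 3) {j : ℕ} (hj : j ≤ n) :
    psum (Fin.snoc w s : Fin (n + 1) → Fin 3) j = psum w j := by
  simp [psum_eq_sum_ite, Fin.sum_univ_castSucc, hj]

lemma psum_snoc_self {n : ℕ} (w : Fin n → Fin 3) (s : Fin 3) :
    psum (Fin.snoc w s : Fin (n + 1) → Fin 3) (n + 1) = psum w n + stepVal s := by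
  simp [psum_self, Fin.sum_univ_castSucc]

lemma walkWeight_snoc (pm p0 p1 : ℝ) {n : ℕ} (w : Fin n → Fin 3) (s : Fin 3) :
    walkWeight pm p0 p1 (Fin.snoc w s : Fin (n + 1) → Fin 3) =
      walkWeight pm p0 p1 w * stepWeight pm p0 p1 s := by
  simp [walkWeight, Fin.prod_univ_castSucc]

lemma abs_psum_le {n : ℕ} (w : Fin n → Fin 3) : |psum w n| ≤ n := by
  have hstep : ∀ s : Fin 3, |stepVal s| ≤ 1 := by decide
  rw [psum_self]
  refine (Finset.abs_sum_le_sum_abs _ _).trans ?_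
  simpa using Finset.sum_le_card_nsmul Finset.univ _ 1 fun i _ => hstep (w i)

lemma signChanges_eq_sum {n : ℕ} (w : Fin n → Fin 3) :
    signChanges w = ∑ j ∈ Finset.range (n + 1), ((Finset.range j).filter fun i =>
      psum w i * psum w j < 0 ∧ ∀ l ∈ Finset.Ioo i j, psum w l = 0).card := by
  rw [signChanges, Finset.card_filter, Finset.sum_product_right]
  refine Finset.sum_congr rfl fun j hj => ?_
  rw [← Finset.card_filter]
  congr 1
  ext i
  simp only [Finset.mem_filter, Finset.mem_range] at hj ⊢
  constructor
  · rintro ⟨-, h⟩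
    exact h
  · intro h
    exact ⟨by omega, h⟩

/-- A walk that is extended to end above the axis gains a sign change exactly when the part
before the last step is a negative bridge. -/
lemma signChanges_snoc {n : ℕ} (w : Fin n → Fin 3) (s : Fin 3) (hw : 0 ≤ psum w n)
    (hs : 0 < psum w n + stepVal s) :
    signChanges (Fin.snoc w s : Fin (n + 1) → Fin 3) =
      signChanges w + if IsNegBridge w then 1 else 0 := by
  rw [signChanges_eq_sum, signChanges_eq_sum, Finset.sum_range_succ]
  congr 1
  · refine Finset.sum_congr rfl fun j hj => ?_
    congr 1
    refine Finset.filter_congr fun i hi => ?_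
    simp only [Finset.mem_range, Finset.mem_Ioo] at hi hj ⊢
    rw [psum_snoc_of_le w s (by omega), psum_snoc_of_le w s (by omega)]
    refine and_congr_right fun _ => forall₂_congr fun l hl => ?_
    rw [psum_snoc_of_le w s (by omega)]
  · have hsign : ∀ a : ℤ, a * (psum w n + stepVal s) < 0 ↔ a < 0 := fun a =>
      ⟨fun h => by_contra fun ha => h.not_ge (mul_nonneg (not_lt.1 ha) hs.le),
        fun h => mul_neg_of_neg_of_pos h hs⟩
    trans ((Finset.range (n + 1)).filter fun i =>
      psum w i < 0 ∧ ∀ l ∈ Finset.Ioc i n, psum w l = 0).card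
    · congr 1
      ext i
      simp only [Finset.mem_filter, Finset.mem_range, Finset.mem_Ioo, Finset.mem_Ioc]
      refine and_congr_right fun hi => ?_
      rw [psum_snoc_of_le w s (by omega), psum_snoc_self, hsign]
      refine and_congr_right fun _ => ⟨fun h l hl => ?_, fun h l hl => ?_⟩
      · rw [← psum_snoc_of_le w s hl.2]
        exact h l (by omega)
      · rw [psum_snoc_of_le w s (by omega)]
        exact h l (by omega)
    split_ifs with h
    · obtain ⟨-, j, hj, hneg, hzero⟩ := h
      rw [Finset.card_eq_one]
      refine ⟨j, Finset.eq_singleton_iff_unique_mem.2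
        ⟨Finset.mem_filter.2 ⟨hj, hneg, hzero⟩, fun i hi => ?_⟩⟩
      simp only [Finset.mem_filter, Finset.mem_range, Finset.mem_Ioc] at hi hj hzero
      rcases lt_trichotomy i j with hij | hij | hij
      · have := hi.2.2 j (by omega)
        omega
      · exact hij
      · have := hzero i (by omega)
        omega
    · rw [Finset.card_eq_zero, Finset.filter_eq_empty_iff]
      rintro i hi ⟨hneg, hzero⟩
      refine h ⟨?_, i, hi, hneg, hzero⟩
      rw [Finset.mem_range] at hi
      rcases (by omega : i = n ∨ i < n) with rfl | hin
      · omega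
      · exact hzero n (by simp [hin])

/-- The reflection of a walk in the horizontal axis. -/
def reflectWalk (n : ℕ) : (Fin n → Fin 3) ≃ (Fin n → Fin 3) :=
  Equiv.arrowCongr (Equiv.refl _) Fin.revPerm

lemma psum_reflectWalk {n : ℕ} (w : Fin n → Fin 3) (j : ℕ) :
    psum (reflectWalk n w) j = - psum w j := by
  have hstep : ∀ s : Fin 3, stepVal s.rev = - stepVal s := by decide
  simp [psum, reflectWalk, hstep]

lemma signChanges_reflectWalk {n : ℕ} (w : Fin n → Fin 3) :
    signChanges (reflectWalk n w) = signChanges w := by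
  simp [signChanges, psum_reflectWalk]

lemma isNegBridge_reflectWalk {n : ℕ} (w : Fin n → Fin 3) :
    IsNegBridge (reflectWalk n w) ↔ IsPosBridge w := by
  simp [IsNegBridge, IsPosBridge, psum_reflectWalk]

lemma walkWeight_reflectWalk (pm p0 p1 : ℝ) {n : ℕ} (w : Fin n → Fin 3) :
    walkWeight pm p0 p1 (reflectWalk n w) = walkWeight p1 p0 pm w := by
  refine Finset.prod_congr rfl fun i _ => ?_
  have hstep : ∀ s : Fin 3, stepWeight pm p0 p1 s.rev = stepWeight p1 p0 pm s := by
    intro s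
    fin_cases s <;> simp [stepWeight, Fin.rev]
  exact hstep (w i)

lemma walkWeight_swap {pm p1 : ℝ} (p0 : ℝ) (hpm : 0 < pm) (hp1 : 0 < p1) {n : ℕ}
    (w : Fin n → Fin 3) (hw : psum w n = 0) :
    walkWeight p1 p0 pm w = walkWeight pm p0 p1 w := by
  have hstep : ∀ s, stepWeight p1 p0 pm s =
      stepWeight pm p0 p1 s * (pm / p1) ^ stepVal s := by
    intro s
    fin_cases s <;> simp [stepWeight, stepVal] <;> field_simp
  have hpow : ∏ i, (pm / p1) ^ stepVal (w i) = (pm / p1) ^ ∑ i, stepVal (w i) := by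
    induction (Finset.univ : Finset (Fin n)) using Finset.induction_on with
    | empty => simp
    | insert a s ha ih =>
      rw [Finset.prod_insert ha, Finset.sum_insert ha, zpow_add₀ (by positivity), ih]
  simp only [walkWeight, hstep, Finset.prod_mul_distrib]
  rw [hpow, ← psum_self, hw, zpow_zero, mul_one]

lemma walkWeight_nonneg {pm p0 p1 : ℝ} (hpm : 0 < pm) (hp0 : 0 < p0) (hp1 : 0 < p1) {n : ℕ}
    (w : Fin n → Fin 3) : 0 ≤ walkWeight pm p0 p1 w := by
  refine Finset.prod_nonneg fun i _ => ?_
  unfold stepWeight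
  split_ifs <;> positivity

lemma sum_walkWeight (pm p0 p1 : ℝ) (n : ℕ) :
    ∑ w : Fin n → Fin 3, walkWeight pm p0 p1 w = (pm + p0 + p1) ^ n := by
  have := Fintype.sum_pow (stepWeight pm p0 p1) n
  simp only [walkWeight, ← this]
  simp [Fin.sum_univ_three, stepWeight]

/-- Weight of the walks from the origin to height `x` that stay above the axis after time `0`. -/
def tailWeight (pm p0 p1 : ℝ) : ℕ → ℕ → ℝ
  | 0, 0 => 1
  | 0, _ + 1 => 0
  | _ + 1, 0 => 0
  | j + 1, x + 1 => p1 * tailWeight pm p0 p1 j x + p0 * tailWeight pm p0 p1 j (x + 1) +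
      pm * tailWeight pm p0 p1 j (x + 2)

lemma tailWeight_nonneg {pm p0 p1 : ℝ} (hpm : 0 < pm) (hp0 : 0 < p0) (hp1 : 0 < p1)
    (j x : ℕ) : 0 ≤ tailWeight pm p0 p1 j x := by
  induction j generalizing x with
  | zero => cases x <;> simp [tailWeight]
  | succ j ih =>
    cases x with
    | zero => simp [tailWeight]
    | succ x =>
      have h₀ := ih x
      have h₁ := ih (x + 1)
      have h₂ := ih (x + 2)
      simp only [tailWeight]
      positivity

lemma tailWeight_eq_zero (pm p0 p1 : ℝ) {j x : ℕ} (h : j < x) : tailWeight pm p0 p1 j x = 0 := by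
  induction j generalizing x with
  | zero =>
    obtain ⟨x, rfl⟩ := Nat.exists_eq_add_of_lt h
    simp [tailWeight]
  | succ j ih =>
    obtain ⟨x, rfl⟩ : ∃ y, x = y + 1 := ⟨x - 1, by omega⟩
    simp [tailWeight, ih (show j < x by omega), ih (show j < x + 1 by omega),
      ih (show j < x + 2 by omega)]

/-- A solution of the Motzkin recurrence on the half line is the convolution of its boundary
values with the tail weights. -/
lemma eq_sum_antidiagonal_tailWeight {pm p0 p1 : ℝ} {a : ℕ → ℕ → ℝ}
    (hzero : ∀ x, a 0 (x + 1) = 0)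
    (hsucc : ∀ n x, a (n + 1) (x + 1) = p1 * a n x + p0 * a n (x + 1) + pm * a n (x + 2))
    (n x : ℕ) :
    a n x = ∑ ij ∈ Finset.HasAntidiagonal.antidiagonal n, a ij.1 0 * tailWeight pm p0 p1 ij.2 x := by
  induction n generalizing x with
  | zero => cases x <;> simp [tailWeight, hzero]
  | succ n ih =>
    rw [Finset.Nat.sum_antidiagonal_succ']
    cases x with
    | zero => simp [tailWeight]
    | succ x =>
      rw [hsucc, ih x, ih (x + 1), ih (x + 2)]
      simp only [tailWeight, Finset.mul_sum, ← Finset.sum_add_distrib, mul_zero, zero_add]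
      exact Finset.sum_congr rfl fun _ _ => by ring

/-- Weight, with `u` marking sign changes, of the walks of length `n` ending at height `x`,
where a negative bridge counts one extra sign change. -/
noncomputable def upperWeight (pm p0 p1 u : ℝ) (n : ℕ) (x : ℤ) : ℝ :=
  ∑ w : Fin n → Fin 3, if psum w n = x then
    walkWeight pm p0 p1 w * u ^ (signChanges w + if IsNegBridge w then 1 else 0) else 0

lemma not_isNegBridge_of_psum_ne_zero {n : ℕ} {w : Fin n → Fin 3} (h : psum w n ≠ 0) :
    ¬ IsNegBridge w := fun hw => h hw.1

lemma upperWeight_zero_succ (pm p0 p1 u : ℝ) (x : ℕ) :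
    upperWeight pm p0 p1 u 0 ((x + 1 : ℕ) : ℤ) = 0 := by
  refine Finset.sum_eq_zero fun w _ => if_neg ?_
  rw [psum_self]
  simp
  omega

lemma upperWeight_succ_succ (pm p0 p1 u : ℝ) (n x : ℕ) :
    upperWeight pm p0 p1 u (n + 1) ((x + 1 : ℕ) : ℤ) =
      p1 * upperWeight pm p0 p1 u n (x : ℤ) + p0 * upperWeight pm p0 p1 u n ((x + 1 : ℕ) : ℤ) +
        pm * upperWeight pm p0 p1 u n ((x + 2 : ℕ) : ℤ) := by
  have hterm : ∀ (w : Fin n → Fin 3) (s : Fin 3),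
      (if psum (Fin.snoc w s : Fin (n + 1) → Fin 3) (n + 1) = ((x + 1 : ℕ) : ℤ) then
        walkWeight pm p0 p1 (Fin.snoc w s : Fin (n + 1) → Fin 3) *
          u ^ (signChanges (Fin.snoc w s : Fin (n + 1) → Fin 3) +
            if IsNegBridge (Fin.snoc w s : Fin (n + 1) → Fin 3) then 1 else 0) else 0) =
      stepWeight pm p0 p1 s * (if psum w n = ((x + 1 : ℕ) : ℤ) - stepVal s then
        walkWeight pm p0 p1 w * u ^ (signChanges w + if IsNegBridge w then 1 else 0) else 0) := by
    intro w s
    have hstep : ∀ s : Fin 3, stepVal s ≤ 1 := by decide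
    have hs := hstep s
    by_cases h : psum w n = ((x + 1 : ℕ) : ℤ) - stepVal s
    · have h' : psum (Fin.snoc w s : Fin (n + 1) → Fin 3) (n + 1) = ((x + 1 : ℕ) : ℤ) := by
        rw [psum_snoc_self]
        omega
      rw [if_pos h, if_pos h', if_neg (not_isNegBridge_of_psum_ne_zero (by omega)),
        signChanges_snoc w s (by omega) (by omega), walkWeight_snoc]
      ring
    · rw [if_neg h, if_neg, mul_zero]
      rw [psum_snoc_self]
      omega
  have h2 : ((x + 1 : ℕ) : ℤ) - stepVal 2 = x := by simp [stepVal]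
  have h1 : ((x + 1 : ℕ) : ℤ) - stepVal 1 = (x + 1 : ℕ) := by simp [stepVal]
  have h0 : ((x + 1 : ℕ) : ℤ) - stepVal 0 = (x + 2 : ℕ) := by simp [stepVal]; ring
  rw [upperWeight, ← (Fin.snocEquiv fun _ => Fin 3).sum_comp, Fintype.sum_prod_type]
  refine (Finset.sum_congr rfl fun s _ => Finset.sum_congr rfl fun w _ => hterm w s).trans ?_
  simp only [← Finset.mul_sum]
  rw [Fin.sum_univ_three, h0, h1, h2]
  simp only [stepWeight, upperWeight]
  simp
  ring

/-- Weight, with `u` marking sign changes, of the walks of length `n` in the class `Q`. -/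
noncomputable def classWeight (Q : ∀ n : ℕ, (Fin n → Fin 3) → Prop) (pm p0 p1 u : ℝ) (n : ℕ) : ℝ :=
  ∑ w : Fin n → Fin 3, if Q n w then walkWeight pm p0 p1 w * u ^ signChanges w else 0

lemma classWeight_posBridge_eq_negBridge {pm p1 : ℝ} (p0 : ℝ) (hpm : 0 < pm) (hp1 : 0 < p1)
    (u : ℝ) (n : ℕ) :
    classWeight (fun _ w => IsPosBridge w) pm p0 p1 u n =
      classWeight (fun _ w => IsNegBridge w) pm p0 p1 u n := by
  refine Fintype.sum_equiv (reflectWalk n) _ _ fun w => ?_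
  simp only [isNegBridge_reflectWalk, walkWeight_reflectWalk, signChanges_reflectWalk]
  by_cases h : IsPosBridge w
  · rw [if_pos h, if_pos h, walkWeight_swap p0 hpm hp1 w h.1]
  · rw [if_neg h, if_neg h]

lemma upperWeight_zero_right {pm p1 : ℝ} (p0 : ℝ) (hpm : 0 < pm) (hp1 : 0 < p1)
    (u : ℝ) (n : ℕ) :
    upperWeight pm p0 p1 u n 0 = classWeight (fun n w => psum w n = 0) pm p0 p1 u n +
      (u - 1) * classWeight (fun _ w => IsPosBridge w) pm p0 p1 u n := by
  rw [classWeight_posBridge_eq_negBridge p0 hpm hp1, upperWeight, classWeight, classWeight,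
    Finset.mul_sum, ← Finset.sum_add_distrib]
  refine Finset.sum_congr rfl fun w _ => ?_
  by_cases h0 : psum w n = 0
  · by_cases h : IsNegBridge w
    · simp only [h0, h, if_true, pow_succ]
      ring
    · simp [h0, h]
  · simp [h0, not_isNegBridge_of_psum_ne_zero h0]

lemma upperWeight_swap_zero_right {pm p1 : ℝ} (p0 : ℝ) (hpm : 0 < pm) (hp1 : 0 < p1)
    (u : ℝ) (n : ℕ) : upperWeight p1 p0 pm u n 0 = upperWeight pm p0 p1 u n 0 := by
  refine Finset.sum_congr rfl fun w _ => if_ctx_congr Iff.rfl (fun h => ?_) fun _ => rfl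
  rw [walkWeight_swap p0 hpm hp1 w h]

lemma classWeight_pos (pm p0 p1 u : ℝ) (n : ℕ) :
    classWeight (fun n w => 0 < psum w n) pm p0 p1 u n =
      ∑ x ∈ Finset.range n, upperWeight pm p0 p1 u n ((x + 1 : ℕ) : ℤ) := by
  simp only [upperWeight, classWeight]
  rw [Finset.sum_comm]
  refine Finset.sum_congr rfl fun w _ => ?_
  have hle := (le_abs_self _).trans (abs_psum_le w)
  by_cases h : 0 < psum w n
  · rw [if_pos h, Finset.sum_eq_single_of_mem ((psum w n).toNat - 1) (by simp; omega),
      if_pos (by omega), if_neg (not_isNegBridge_of_psum_ne_zero h.ne'), add_zero]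
    intro x _ hx
    exact if_neg (by omega)
  · rw [if_neg h]
    exact (Finset.sum_eq_zero fun x _ => if_neg (by omega)).symm

lemma classWeight_neg (pm p0 p1 u : ℝ) (n : ℕ) :
    classWeight (fun n w => psum w n < 0) pm p0 p1 u n =
      classWeight (fun n w => 0 < psum w n) p1 p0 pm u n := by
  refine Fintype.sum_equiv (reflectWalk n) _ _ fun w => ?_
  simp only [psum_reflectWalk, walkWeight_reflectWalk, signChanges_reflectWalk]
  by_cases h : psum w n < 0
  · rw [if_pos h, if_pos (by omega)]
  · rw [if_neg h, if_neg (by omega)]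

/-- Total weight of the walks of length `j` that avoid the axis after time `0`. -/
def totalTailWeight (pm p0 p1 : ℝ) (j : ℕ) : ℝ :=
  ∑ x ∈ Finset.range j, (tailWeight pm p0 p1 j (x + 1) + tailWeight p1 p0 pm j (x + 1))

lemma totalTailWeight_nonneg {pm p0 p1 : ℝ} (hpm : 0 < pm) (hp0 : 0 < p0) (hp1 : 0 < p1)
    (j : ℕ) : 0 ≤ totalTailWeight pm p0 p1 j :=
  Finset.sum_nonneg fun _ _ =>
    add_nonneg (tailWeight_nonneg hpm hp0 hp1 _ _) (tailWeight_nonneg hp1 hp0 hpm _ _)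

lemma totalTailWeight_eq_sum_range (pm p0 p1 : ℝ) {j n : ℕ} (h : j ≤ n) :
    totalTailWeight pm p0 p1 j =
      ∑ x ∈ Finset.range n, (tailWeight pm p0 p1 j (x + 1) + tailWeight p1 p0 pm j (x + 1)) := by
  refine Finset.sum_subset (Finset.range_mono h) fun x _ hx => ?_
  rw [Finset.mem_range] at hx
  rw [tailWeight_eq_zero _ _ _ (by omega), tailWeight_eq_zero _ _ _ (by omega), add_zero]

/-- Decomposition of a walk at its last visit to the axis. -/
lemma classWeight_true {pm p1 : ℝ} (p0 : ℝ) (hpm : 0 < pm) (hp1 : 0 < p1) (u : ℝ) (n : ℕ) :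
    classWeight (fun _ _ => True) pm p0 p1 u n =
      classWeight (fun n w => psum w n = 0) pm p0 p1 u n +
        ∑ ij ∈ Finset.HasAntidiagonal.antidiagonal n,
          upperWeight pm p0 p1 u ij.1 0 * totalTailWeight pm p0 p1 ij.2 := by
  have hsplit : classWeight (fun _ _ => True) pm p0 p1 u n =
      classWeight (fun n w => psum w n = 0) pm p0 p1 u n +
        (classWeight (fun n w => 0 < psum w n) pm p0 p1 u n +
          classWeight (fun n w => psum w n < 0) pm p0 p1 u n) := by
    simp only [classWeight, ← Finset.sum_add_distrib]
    refine Finset.sum_congr rfl fun w _ => ?_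
    rcases lt_trichotomy (psum w n) 0 with h | h | h
    · simp [h, h.ne, h.le]
    · simp [h]
    · simp [h, h.ne', h.le]
  have hconv : ∀ (q₀ q₁ : ℝ) (x : ℕ), upperWeight q₀ p0 q₁ u n (x : ℤ) =
      ∑ ij ∈ Finset.HasAntidiagonal.antidiagonal n,
        upperWeight q₀ p0 q₁ u ij.1 0 * tailWeight q₀ p0 q₁ ij.2 x := fun q₀ q₁ x =>
    eq_sum_antidiagonal_tailWeight (a := fun n x => upperWeight q₀ p0 q₁ u n (x : ℤ))
      (upperWeight_zero_succ q₀ p0 q₁ u) (upperWeight_succ_succ q₀ p0 q₁ u) n x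
  rw [hsplit, classWeight_neg, classWeight_pos, classWeight_pos, ← Finset.sum_add_distrib]
  congr 1
  simp only [hconv, upperWeight_swap_zero_right p0 hpm hp1, ← Finset.sum_add_distrib, ← mul_add]
  rw [Finset.sum_comm]
  refine Finset.sum_congr rfl fun ij hij => ?_
  have hle : ij.2 ≤ n := by
    have := Finset.HasAntidiagonal.mem_antidiagonal.1 hij
    omega
  rw [totalTailWeight_eq_sum_range pm p0 p1 hle, Finset.mul_sum]

lemma classWeight_nonneg (Q : ∀ n : ℕ, (Fin n → Fin 3) → Prop) {pm p0 p1 u : ℝ}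
    (hpm : 0 < pm) (hp0 : 0 < p0) (hp1 : 0 < p1) (hu : 0 ≤ u) (n : ℕ) :
    0 ≤ classWeight Q pm p0 p1 u n := by
  refine Finset.sum_nonneg fun w _ => ?_
  have := walkWeight_nonneg hpm hp0 hp1 w
  split_ifs <;> positivity

lemma classWeight_le (Q : ∀ n : ℕ, (Fin n → Fin 3) → Prop) {pm p0 p1 u : ℝ}
    (hpm : 0 < pm) (hp0 : 0 < p0) (hp1 : 0 < p1) (hu : 0 ≤ u) (hu1 : u ≤ 1) (n : ℕ) :
    classWeight Q pm p0 p1 u n ≤ (pm + p0 + p1) ^ n := by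
  rw [← sum_walkWeight]
  refine Finset.sum_le_sum fun w _ => ?_
  have := walkWeight_nonneg hpm hp0 hp1 w
  split_ifs
  · exact mul_le_of_le_one_right this (pow_le_one₀ hu hu1)
  · exact this

lemma classWeight_true_one (pm p0 p1 : ℝ) (n : ℕ) :
    classWeight (fun _ _ => True) pm p0 p1 1 n = (pm + p0 + p1) ^ n := by
  simp [classWeight, sum_walkWeight]

lemma classWeight_bridge_zero (pm p0 p1 u : ℝ) :
    classWeight (fun n w => psum w n = 0) pm p0 p1 u 0 = 1 := by
  simp [classWeight, psum_self, walkWeight, signChanges_eq_sum]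

lemma summable_mul_pow_of_le {a : ℕ → ℝ} {P z : ℝ} (hz : 0 ≤ z) (hP : 0 ≤ P) (hzP : z * P < 1)
    (ha : ∀ n, 0 ≤ a n) (haP : ∀ n, a n ≤ P ^ n) : Summable fun n => a n * z ^ n := by
  refine Summable.of_nonneg_of_le (fun n => mul_nonneg (ha n) (pow_nonneg hz n)) (fun n => ?_)
    (summable_geometric_of_lt_one (mul_nonneg hz hP) hzP)
  rw [mul_pow, mul_comm]
  exact mul_le_mul_of_nonneg_left (haP n) (pow_nonneg hz n)

/-- The bivariate series of a class of walks sums to the series of its class weights. -/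
lemma hasSum_classWeight (Q : ∀ n : ℕ, (Fin n → Fin 3) → Prop) [∀ n, DecidablePred (Q n)]
    {pm p0 p1 z u : ℝ}
    (hpm : 0 < pm) (hp0 : 0 < p0) (hp1 : 0 < p1) (hz : 0 ≤ z) (hzP : z * (pm + p0 + p1) < 1)
    (hu : 0 ≤ u) (hu1 : u ≤ 1) {c : ℕ → ℕ → ℝ}
    (hc : ∀ n k, c n k = ∑ w : Fin n → Fin 3,
      if Q n w ∧ signChanges w = k then walkWeight pm p0 p1 w else 0) :
    HasSum (fun p : ℕ × ℕ => c p.1 p.2 * z ^ p.1 * u ^ p.2)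
      (∑' n, classWeight Q pm p0 p1 u n * z ^ n) := by
  have hfiber : ∀ n, HasSum (fun k => c n k * z ^ n * u ^ k)
      (classWeight Q pm p0 p1 u n * z ^ n) := by
    intro n
    simp only [hc, classWeight, Finset.sum_mul]
    refine hasSum_sum fun w _ => ?_
    convert hasSum_ite_eq (signChanges w)
      ((if Q n w then walkWeight pm p0 p1 w * u ^ signChanges w else 0) * z ^ n) using 2 with k
    · by_cases hk : k = signChanges w
      · subst hk
        by_cases hQ : Q n w
        · simp only [hQ, and_self, if_true]
          ring
        · simp [hQ]
      · simp [hk, Ne.symm hk]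
    · congr
  have hnonneg : 0 ≤ fun p : ℕ × ℕ => c p.1 p.2 * z ^ p.1 * u ^ p.2 := by
    intro p
    have : 0 ≤ c p.1 p.2 := by
      rw [hc]
      refine Finset.sum_nonneg fun w _ => ?_
      split_ifs
      · exact walkWeight_nonneg hpm hp0 hp1 w
      · exact le_rfl
    simp only [Pi.zero_apply]
    positivity
  have hsum : Summable fun p : ℕ × ℕ => c p.1 p.2 * z ^ p.1 * u ^ p.2 := by
    refine (summable_prod_of_nonneg hnonneg).2 ⟨fun n => (hfiber n).summable, ?_⟩
    simp only [(hfiber _).tsum_eq]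
    exact summable_mul_pow_of_le hz (by positivity) hzP
      (classWeight_nonneg Q hpm hp0 hp1 hu) (classWeight_le Q hpm hp0 hp1 hu hu1)
  convert hsum.hasSum using 1
  rw [hsum.tsum_prod]
  simp only [(hfiber _).tsum_eq]

lemma totalTailWeight_le {pm p0 p1 : ℝ} (hpm : 0 < pm) (hp0 : 0 < p0) (hp1 : 0 < p1) (n : ℕ) :
    totalTailWeight pm p0 p1 n ≤ (pm + p0 + p1) ^ n := by
  have hupper : ∀ i, upperWeight pm p0 p1 1 i 0 =
      classWeight (fun n w => psum w n = 0) pm p0 p1 1 i := by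
    simp [upperWeight_zero_right p0 hpm hp1]
  have hB := classWeight_nonneg (fun n w => psum w n = 0) hpm hp0 hp1 zero_le_one
  have hterm := Finset.single_le_sum (s := Finset.HasAntidiagonal.antidiagonal n)
    (f := fun ij : ℕ × ℕ => upperWeight pm p0 p1 1 ij.1 0 * totalTailWeight pm p0 p1 ij.2)
    (fun ij _ => mul_nonneg ((hupper ij.1).symm ▸ hB ij.1)
      (totalTailWeight_nonneg hpm hp0 hp1 ij.2)) (show (0, n) ∈ _ by simp)
  have htotal := classWeight_true p0 hpm hp1 1 n
  rw [classWeight_true_one] at htotal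
  simp only [hupper 0, classWeight_bridge_zero, one_mul] at hterm
  linarith [hB n]

/-- Summed form of the decomposition of a walk at its last visit to the axis. -/
lemma tsum_classWeight_true {pm p0 p1 z u : ℝ} (hpm : 0 < pm) (hp0 : 0 < p0) (hp1 : 0 < p1)
    (hz : 0 ≤ z) (hzP : z * (pm + p0 + p1) < 1) (hu : 0 ≤ u) (hu1 : u ≤ 1) :
    ∑' n, classWeight (fun _ _ => True) pm p0 p1 u n * z ^ n =
      ∑' n, classWeight (fun n w => psum w n = 0) pm p0 p1 u n * z ^ n +
        (∑' n, classWeight (fun n w => psum w n = 0) pm p0 p1 u n * z ^ n +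
          (u - 1) * ∑' n, classWeight (fun _ w => IsPosBridge w) pm p0 p1 u n * z ^ n) *
          ∑' n, totalTailWeight pm p0 p1 n * z ^ n := by
  have hclass : ∀ Q : ∀ n : ℕ, (Fin n → Fin 3) → Prop,
      Summable fun n => classWeight Q pm p0 p1 u n * z ^ n := fun Q =>
    summable_mul_pow_of_le hz (by positivity) hzP
      (classWeight_nonneg Q hpm hp0 hp1 hu) (classWeight_le Q hpm hp0 hp1 hu hu1)
  have htail : Summable fun n => totalTailWeight pm p0 p1 n * z ^ n :=
    summable_mul_pow_of_le hz (by positivity) hzP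
      (totalTailWeight_nonneg hpm hp0 hp1) (totalTailWeight_le hpm hp0 hp1)
  have hB := hclass fun n w => psum w n = 0
  have hD := (hclass fun _ w => IsPosBridge w).mul_left (u - 1)
  have hupper : ∀ n, upperWeight pm p0 p1 u n 0 * z ^ n =
      classWeight (fun n w => psum w n = 0) pm p0 p1 u n * z ^ n +
        (u - 1) * (classWeight (fun _ w => IsPosBridge w) pm p0 p1 u n * z ^ n) := by
    intro n
    rw [upperWeight_zero_right p0 hpm hp1]
    ring
  have hE : Summable fun n => upperWeight pm p0 p1 u n 0 * z ^ n := by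
    simpa only [hupper] using hB.add hD
  rw [← tsum_mul_left (a := u - 1), ← hB.tsum_add hD]
  simp only [← hupper]
  rw [tsum_mul_tsum_eq_tsum_sum_antidiagonal_of_summable_norm hE.norm htail.norm,
    ← hB.tsum_add (summable_norm_sum_mul_antidiagonal_of_summable_norm hE.norm htail.norm).of_norm]
  refine tsum_congr fun n => ?_
  rw [classWeight_true p0 hpm hp1, add_mul, Finset.sum_mul]
  congr 1
  refine Finset.sum_congr rfl fun ij hij => ?_
  rw [← Finset.HasAntidiagonal.mem_antidiagonal.1 hij, pow_add]
  ring

/-- **Bivariate generating function of walks by sign changes**: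
`W(z,u) = B(z,u)W(z)/B(z) + B₊(z,u)(W(z)/B(z) - 1)(u - 1)`. -/
theorem walks_sign_changes_gf (pm p0 p1 : ℝ)
    (hpm : 0 < pm) (hp0 : 0 < p0) (hp1 : 0 < p1) :
    let P1 : ℝ := pm + p0 + p1
    let W : ℝ → ℝ := fun z => 1 / (1 - z * P1)
    ∀ z : ℝ, 0 < z → z < 1 / P1 → ∀ u : ℝ, 0 ≤ u → u ≤ 1 →
      Summable (fun p : ℕ × ℕ => walkSignW pm p0 p1 p.1 p.2 * z ^ p.1 * u ^ p.2) ∧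
      Summable (fun p : ℕ × ℕ => bridgeSignW pm p0 p1 p.1 p.2 * z ^ p.1 * u ^ p.2) ∧
      Summable (fun p : ℕ × ℕ => posBridgeSignW pm p0 p1 p.1 p.2 * z ^ p.1 * u ^ p.2) ∧
      Summable (fun p : ℕ × ℕ => bridgeSignW pm p0 p1 p.1 p.2 * z ^ p.1) ∧
      (∑' p : ℕ × ℕ, walkSignW pm p0 p1 p.1 p.2 * z ^ p.1 * u ^ p.2) =
        (∑' p : ℕ × ℕ, bridgeSignW pm p0 p1 p.1 p.2 * z ^ p.1 * u ^ p.2) *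
          (W z / (∑' p : ℕ × ℕ, bridgeSignW pm p0 p1 p.1 p.2 * z ^ p.1)) +
        (∑' p : ℕ × ℕ, posBridgeSignW pm p0 p1 p.1 p.2 * z ^ p.1 * u ^ p.2) *
          (W z / (∑' p : ℕ × ℕ, bridgeSignW pm p0 p1 p.1 p.2 * z ^ p.1) - 1) * (u - 1) := by
  intro P1 W z hz hzP u hu hu1
  have hP1 : 0 < P1 := by positivity
  have hzP1 : z * (pm + p0 + p1) < 1 := (lt_div_iff₀ hP1).1 hzP
  have hwalk := hasSum_classWeight (fun _ _ => True) hpm hp0 hp1 hz.le hzP1 hu hu1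
    (c := walkSignW pm p0 p1) fun n k => by simp [walkSignW, Finset.sum_filter]
  have hbridgeW : ∀ n k, bridgeSignW pm p0 p1 n k = ∑ w : Fin n → Fin 3,
      if psum w n = 0 ∧ signChanges w = k then walkWeight pm p0 p1 w else 0 := fun n k => by
    rw [bridgeSignW, Finset.sum_filter]
  have hbridge := hasSum_classWeight (fun n w => psum w n = 0) hpm hp0 hp1 hz.le hzP1 hu hu1
    hbridgeW
  have hbridge1 := hasSum_classWeight (fun n w => psum w n = 0) hpm hp0 hp1 hz.le hzP1
    zero_le_one le_rfl hbridgeW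
  have hpos := hasSum_classWeight (fun _ w => IsPosBridge w) hpm hp0 hp1 hz.le hzP1 hu hu1
    (c := posBridgeSignW pm p0 p1) fun n k => by rw [posBridgeSignW, Finset.sum_filter]
  simp only [one_pow, mul_one] at hbridge1
  refine ⟨hwalk.summable, hbridge.summable, hpos.summable, hbridge1.summable, ?_⟩
  rw [hwalk.tsum_eq, hbridge.tsum_eq, hpos.tsum_eq, hbridge1.tsum_eq,
    tsum_classWeight_true hpm hp0 hp1 hz.le hzP1 hu hu1]
  have htotal := tsum_classWeight_true hpm hp0 hp1 hz.le hzP1 zero_le_one le_rfl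
  have hgeom : ∑' n, classWeight (fun _ _ => True) pm p0 p1 1 n * z ^ n = W z := by
    simp only [classWeight_true_one, ← mul_pow]
    rw [tsum_geometric_of_lt_one (by positivity) (by rwa [mul_comm]), mul_comm, ← one_div]
  have hBpos : 0 < ∑' n, classWeight (fun n w => psum w n = 0) pm p0 p1 1 n * z ^ n := by
    refine Summable.tsum_pos (summable_mul_pow_of_le hz.le hP1.le hzP1
      (classWeight_nonneg _ hpm hp0 hp1 zero_le_one)
      (classWeight_le _ hpm hp0 hp1 zero_le_one le_rfl))
      (fun n => mul_nonneg (classWeight_nonneg _ hpm hp0 hp1 zero_le_one n)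
        (pow_nonneg hz.le n)) 0 ?_
    simp [classWeight_bridge_zero]
  rw [hgeom, sub_self, zero_mul, add_zero] at htotal
  have hratio : W z / ∑' n, classWeight (fun n w => psum w n = 0) pm p0 p1 1 n * z ^ n =
      1 + ∑' n, totalTailWeight pm p0 p1 n * z ^ n := by
    rw [htotal]
    field_simp
  rw [hratio]
  ring
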